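/- Let δ be an increment function of size n and let [P,Q] be a left interval of height k ≥ 2 in the alt-Tamari poset Tam^δ_n, i.e. P = A d^k C B and Q = A C d^k B where C is the δ-excursion in P of its first up step. Then P ≤ Q in Tam^δ_n and the interval [P,Q] is linear of height k. -/

import Mathlib

/-!
Common definitions.  A letter of a word is a `Bool`: `true` is an up step `u`,
`false` is a down step `d`.  Positions in words are 0-based.
-/

/-- A (possibly empty) Dyck word: as many `u`'s as `d`'s, and every
prefix has at least as many `u`'s as `d`'s. -/
def IsDyckPath (w : List Bool) : Prop :=
  w.count true = w.count false ∧ ∀ p, p <+: w → p.count false ≤ p.count true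

/-- A Dyck word of size `n`: `n` up steps, `n` down steps, every prefix has
at least as many `u`'s as `d`'s. -/
def IsDyckWord (n : ℕ) (w : List Bool) : Prop :=
  w.count true = n ∧ w.count false = n ∧ ∀ p, p <+: w → p.count false ≤ p.count true

/-- The set of Dyck words of size `n`. -/
def DyckSet (n : ℕ) : Set (List Bool) := {w | IsDyckWord n w}

/-- An increment function: a `{0,1}`-valued function (the paper's `δ : {1,…,n} → {0,1}`;
only the values on `{1,…,n}` are ever used). -/
def IsIncFun (δ : ℕ → ℤ) : Prop := ∀ i, δ i = 0 ∨ δ i = 1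

/-- The 0-based position in `w` of the `i`-th up step `u_i` (`i` is 1-based). -/
def upPos (w : List Bool) (i : ℕ) : ℕ :=
  ((List.range w.length).filter fun q => w.getD q false = true).getD (i - 1) 0

/-- `h_i(w)`: the (1-based, between 1 and 2n) position of the up step `u_i` in `w`. -/
def hpos (w : List Bool) (i : ℕ) : ℕ := upPos w i + 1

/-- The change of δ-altitude produced by the letter at position `q` of `w`:
the up step `u_i` contributes `δ i`, a down step contributes `-1`. -/
def stepVal (δ : ℕ → ℤ) (w : List Bool) (q : ℕ) : ℤ :=
  if w.getD q false = true then δ ((w.take (q + 1)).count true) else -1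

/-- The δ-elevation of the factor of `w` occupying positions `a, …, b-1`. -/
def elev (δ : ℕ → ℤ) (w : List Bool) (a b : ℕ) : ℤ :=
  ∑ q ∈ Finset.Ico a b, stepVal δ w q

/-- `C` is the δ-excursion of the up step of `w` at position `p`:
the smallest (nonempty) factor of `w` starting at `p` whose δ-elevation is `0`. -/
def IsDeltaExcAt (δ : ℕ → ℤ) (w : List Bool) (p : ℕ) (C : List Bool) : Prop :=
  w.getD p false = true ∧
  ∃ m, 0 < m ∧ p + m ≤ w.length ∧ C = (w.drop p).take m ∧
    elev δ w p (p + m) = 0 ∧ ∀ m', 0 < m' → m' < m → elev δ w p (p + m') ≠ 0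

/-- `C` is the excursion of the up step of `w` at position `p`: the smallest factor
of `w` starting at `p` that is itself a Dyck word. -/
def IsExcursionAt (w : List Bool) (p : ℕ) (C : List Bool) : Prop :=
  w.getD p false = true ∧
  ∃ m, 0 < m ∧ p + m ≤ w.length ∧ C = (w.drop p).take m ∧ IsDyckPath C ∧
    ∀ m', 0 < m' → m' < m → ¬ IsDyckPath ((w.drop p).take m')

/-- `ℓ_i(w; δ)`: the length of the δ-excursion of `u_i` in `w`. -/
noncomputable def excLen (δ : ℕ → ℤ) (w : List Bool) (i : ℕ) : ℕ :=
  sInf {m | 0 < m ∧ elev δ w (upPos w i) (upPos w i + m) = 0}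

/-- `Q` is the δ-rotation of `P` at some up step: `P = A d C B` with `d u_i` a valley
and `C` the δ-excursion of `u_i`, and `Q = A C d B`. -/
def DeltaRot (δ : ℕ → ℤ) (P Q : List Bool) : Prop :=
  ∃ A C B, P = A ++ false :: (C ++ B) ∧ Q = A ++ (C ++ false :: B) ∧
    IsDeltaExcAt δ P (A.length + 1) C

/-- The alt-Tamari order `Tam^δ`: reflexive transitive closure of δ-rotations. -/
def altLE (δ : ℕ → ℤ) : List Bool → List Bool → Prop :=
  Relation.ReflTransGen (DeltaRot δ)

/-- The Tamari order: the alt-Tamari order for `δ ≡ 1` (the δ-excursion of any up step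
is then its excursion). -/
def tamLE : List Bool → List Bool → Prop := altLE fun _ => 1

/-- The height (number of `u`'s minus number of `d`'s) of the length-`j` prefix of `w`. -/
def prefHeight (w : List Bool) (j : ℕ) : ℤ :=
  ((w.take j).count true : ℤ) - ((w.take j).count false : ℤ)

/-- The Dyck (inclusion) order: every prefix height of `P` is at most that of `Q`. -/
def dyckLE (P Q : List Bool) : Prop := ∀ j, prefHeight P j ≤ prefHeight Q j

/-- Strict version of a relation `le`. -/
def ltOf (le : List Bool → List Bool → Prop) (P Q : List Bool) : Prop :=
  le P Q ∧ ¬ le Q P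

/-- There is a strict chain `P = c 0 < c 1 < ⋯ < c k = Q` inside `S`. -/
def HasChainIn (S : Set (List Bool)) (le : List Bool → List Bool → Prop)
    (P Q : List Bool) (k : ℕ) : Prop :=
  ∃ c : ℕ → List Bool, c 0 = P ∧ c k = Q ∧ (∀ i ≤ k, c i ∈ S) ∧
    ∀ i < k, ltOf le (c i) (c (i + 1))

/-- The interval `[P,Q]` of the poset `(S, le)` has height `k`: `k` is the maximal
length of a chain from `P` to `Q`. -/
def IntervalHeight (S : Set (List Bool)) (le : List Bool → List Bool → Prop)
    (P Q : List Bool) (k : ℕ) : Prop :=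
  HasChainIn S le P Q k ∧ ∀ m, HasChainIn S le P Q m → m ≤ k

/-- The interval `[P,Q]` of the poset `(S, le)` is linear: it is totally ordered. -/
def LinearInterval (S : Set (List Bool)) (le : List Bool → List Bool → Prop)
    (P Q : List Bool) : Prop :=
  P ∈ S ∧ Q ∈ S ∧ le P Q ∧
  ∀ R R', R ∈ S → R' ∈ S → le P R → le R Q → le P R' → le R' Q → le R R' ∨ le R' R

/-- `Q` covers `P` in the poset `(S, le)`. -/
def CovIn (S : Set (List Bool)) (le : List Bool → List Bool → Prop)
    (P Q : List Bool) : Prop :=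
  P ∈ S ∧ Q ∈ S ∧ ltOf le P Q ∧ ∀ R ∈ S, ¬ (ltOf le P R ∧ ltOf le R Q)

/-- The number of valleys (factors `du`) of `w`. -/
def valleys (w : List Bool) : ℕ :=
  ((List.range w.length).filter fun q => !w.getD q true && w.getD (q + 1) false).length

/-! A rotation raises by one the δ-altitudes of the up steps of one excursion and changes no other,
so altitudes increase along `altLE`. Moreover, once the up step of index `j` lies in the excursion
of the up step of index `i`, the altitude of `j` relative to `i` never decreases. Along
`A d^k C B, …, A C d^k B` these relative altitudes are constant inside `C`, and the altitudes
outside `C` do not change; hence from any of these words the only rotation that stays below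
`A C d^k B` is the one at the first up step of `C`. -/

section ForcedPath

open Relation

variable {α : Type*} {r : α → α → Prop} {c : ℕ → α} {k : ℕ}

/-- The path `c 0, …, c k` of the relation `r` is forced: the only `r`-step from `c t`, `t < k`,
that can still reach the endpoint `c k` is the one to `c (t + 1)`. -/
structure IsForcedPath (r : α → α → Prop) (c : ℕ → α) (k : ℕ) : Prop where
  rel_succ : ∀ t < k, r (c t) (c (t + 1))
  eq_succ : ∀ t < k, ∀ x, r (c t) x → ReflTransGen r x (c k) → x = c (t + 1)

namespace IsForcedPath

lemma reflTransGen (h : IsForcedPath r c k) {s t : ℕ} (hst : s ≤ t) (ht : t ≤ k) :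
    ReflTransGen r (c s) (c t) := by
  induction t, hst using Nat.le_induction with
  | base => exact .refl
  | succ t _ ih => exact (ih (by lia)).tail (h.rel_succ t ht)

lemma exists_eq (h : IsForcedPath r c k) (hr : ∀ x y, r x y → ¬ ReflTransGen r y x)
    {x : α} (h₀ : ReflTransGen r (c 0) x) (hxk : ReflTransGen r x (c k)) :
    ∃ t ≤ k, x = c t := by
  induction h₀ with
  | refl => exact ⟨0, Nat.zero_le k, rfl⟩
  | tail _ hxy ih =>
    obtain ⟨t, htk, rfl⟩ := ih (hxk.head hxy)
    have ht : t < k := htk.lt_of_ne fun hteq => hr _ _ hxy (hteq ▸ hxk)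
    exact ⟨t + 1, ht, h.eq_succ t ht _ hxy hxk⟩

section Words

variable {r : List Bool → List Bool → Prop} {c : ℕ → List Bool} {S : Set (List Bool)}

lemma ltOf_succ (h : IsForcedPath r c k) (hr : ∀ x y, r x y → ¬ ReflTransGen r y x) {t : ℕ}
    (ht : t < k) : ltOf (ReflTransGen r) (c t) (c (t + 1)) :=
  ⟨.single (h.rel_succ t ht), hr _ _ (h.rel_succ t ht)⟩

lemma linearInterval (h : IsForcedPath r c k) (hr : ∀ x y, r x y → ¬ ReflTransGen r y x)
    (hS : ∀ t ≤ k, c t ∈ S) : LinearInterval S (ReflTransGen r) (c 0) (c k) := by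
  refine ⟨hS 0 (Nat.zero_le k), hS k le_rfl, h.reflTransGen (Nat.zero_le k) le_rfl, ?_⟩
  intro x y _ _ h₀x hxk h₀y hyk
  obtain ⟨s, hs, rfl⟩ := h.exists_eq hr h₀x hxk
  obtain ⟨t, ht, rfl⟩ := h.exists_eq hr h₀y hyk
  exact (le_total s t).imp (h.reflTransGen · ht) (h.reflTransGen · hs)

lemma chain_length_le (h : IsForcedPath r c k) (hr : ∀ x y, r x y → ¬ ReflTransGen r y x)
    {m : ℕ} (hm : HasChainIn S (ReflTransGen r) (c 0) (c k) m) : m ≤ k := by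
  obtain ⟨e, he₀, hem, -, hlt⟩ := hm
  have hmono {i j : ℕ} (hij : i ≤ j) (hj : j ≤ m) : ReflTransGen r (e i) (e j) := by
    induction j, hij using Nat.le_induction with
    | base => exact .refl
    | succ j _ ih => exact (ih (by lia)).trans (hlt j hj).1
  have hrank : ∀ i ≤ m, ∃ t ≤ k, i ≤ t ∧ e i = c t := by
    intro i
    induction i with
    | zero => exact fun _ => ⟨0, Nat.zero_le k, le_rfl, he₀⟩
    | succ i ih =>
      intro hi
      obtain ⟨s, hs, his, hes⟩ := ih (by lia)
      obtain ⟨t, ht, het⟩ := h.exists_eq hr (he₀ ▸ hmono (Nat.zero_le (i + 1)) hi)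
        (hem ▸ hmono hi le_rfl)
      have hst : s < t := by
        by_contra! hts
        exact (hlt i hi).2 (hes ▸ het ▸ h.reflTransGen hts hs)
      exact ⟨t, ht, by lia, het⟩
  obtain ⟨t, ht, hmt, -⟩ := hrank m le_rfl
  exact hmt.trans ht

lemma intervalHeight (h : IsForcedPath r c k) (hr : ∀ x y, r x y → ¬ ReflTransGen r y x)
    (hS : ∀ t ≤ k, c t ∈ S) : IntervalHeight S (ReflTransGen r) (c 0) (c k) k :=
  ⟨⟨c, rfl, rfl, hS, fun _ ht => h.ltOf_succ hr ht⟩, fun _ hm => h.chain_length_le hr hm⟩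

end Words

end IsForcedPath

end ForcedPath

section Raise

variable {f g : ℕ → ℤ} {a b i j : ℕ}

/-- The effect of a rotation on the altitudes of the up steps, `f` before and `g` after: those of
index in `[a, b)` are raised by one, where `[a, b)` is the excursion of `a`, i.e. `b` is the first
index after `a` at which `f` does not exceed `f a`. -/
structure IsRaise (f g : ℕ → ℤ) (a b : ℕ) : Prop where
  lt : a < b
  apply_eq : ∀ j, g j = f j + if a ≤ j ∧ j < b then 1 else 0
  lt_apply : ∀ j, a < j → j < b → f a < f j
  apply_le : f b ≤ f a

/-- The up step of index `j` lies in the excursion of the up step of index `i`, in terms of the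
altitudes `f` of the up steps. -/
def IsNested (f : ℕ → ℤ) (i j : ℕ) : Prop := ∀ x, i < x → x ≤ j → f i < f x

lemma IsRaise.le (h : IsRaise f g a b) : f ≤ g := fun j => by
  rw [h.apply_eq j]
  split_ifs <;> lia

lemma IsRaise.sub_le_sub (h : IsRaise f g a b) (hf : IsNested f i j) (hij : i ≤ j) :
    f j - f i ≤ g j - g i := by
  by_cases hi : a ≤ i ∧ i < b
  · have hjb : j < b := by
      by_contra! hbj
      have hib : f i < f b := hf b hi.2 hbj
      have hai : f a ≤ f i := hi.1.eq_or_lt.elim (fun hai => hai ▸ le_rfl)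
        fun hai => (h.lt_apply i hai hi.2).le
      exact (hib.trans_le h.apply_le).not_ge hai
    rw [h.apply_eq i, h.apply_eq j, if_pos hi, if_pos ⟨hi.1.trans hij, hjb⟩]
    lia
  · have hj : f j ≤ g j := h.le j
    rw [h.apply_eq i, if_neg hi]
    lia

lemma IsRaise.isNested (h : IsRaise f g a b) (hf : IsNested f i j) : IsNested g i j := by
  intro x hix hxj
  have hfx : f i < f x := hf x hix hxj
  have hgx : f x - f i ≤ g x - g i :=
    h.sub_le_sub (fun y hiy hyx => hf y hiy (hyx.trans hxj)) hix.le
  lia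

end Raise

/-- The prefix of `w` that precedes its up step of 0-based index `j`; it is all of `w` if there is
no such up step. -/
def beforeUp : List Bool → ℕ → List Bool
  | [], _ => []
  | false :: w, j => false :: beforeUp w j
  | true :: _, 0 => []
  | true :: w, j + 1 => true :: beforeUp w j

lemma beforeUp_append_of_lt {x : List Bool} {j : ℕ} (h : j < x.count true) (y : List Bool) :
    beforeUp (x ++ y) j = beforeUp x j := by
  induction x, j using beforeUp.induct <;> simp_all [beforeUp]

lemma beforeUp_append_add (x y : List Bool) (j : ℕ) :
    beforeUp (x ++ y) (x.count true + j) = x ++ beforeUp y j := by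
  induction x with
  | nil => simp
  | cons b x ih => cases b <;> simp [beforeUp, ih, Nat.add_right_comm _ 1 j]

lemma beforeUp_prefix (w : List Bool) (j : ℕ) : beforeUp w j <+: w := by
  induction w, j using beforeUp.induct <;> simp_all [beforeUp]

lemma count_true_beforeUp (w : List Bool) (j : ℕ) :
    (beforeUp w j).count true = min j (w.count true) := by
  induction w, j using beforeUp.induct <;> simp_all [beforeUp]

/-- The δ-elevation of the factor `C` of a word in which it is preceded by `a` up steps. Unlike
`elev`, it is independent of the ambient word, so that words can be compared. -/
def factorElev (δ : ℕ → ℤ) (a : ℕ) (C : List Bool) : ℤ :=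
  (∑ i ∈ Finset.range (C.count true), δ (a + i + 1)) - C.count false

/-- `C` is a δ-excursion in any word in which it is preceded by `a` up steps; minimality is stated
for the proper nonempty prefixes of `C`. -/
structure IsExcursionAfter (δ : ℕ → ℤ) (a : ℕ) (C : List Bool) : Prop where
  head : C.head? = some true
  elev_eq_zero : factorElev δ a C = 0
  elev_ne_zero : ∀ p, p <+: C → p ≠ [] → p ≠ C → factorElev δ a p ≠ 0

section FactorElev

variable {δ : ℕ → ℤ}

lemma factorElev_nil (δ : ℕ → ℤ) (a : ℕ) : factorElev δ a [] = 0 := by simp [factorElev]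

lemma factorElev_append (δ : ℕ → ℤ) (a : ℕ) (x y : List Bool) :
    factorElev δ a (x ++ y) = factorElev δ a x + factorElev δ (a + x.count true) y := by
  simp only [factorElev, List.count_append, Finset.sum_range_add, Nat.cast_add, Nat.add_assoc]
  ring

lemma factorElev_false_cons (δ : ℕ → ℤ) (a : ℕ) (w : List Bool) :
    factorElev δ a (false :: w) = factorElev δ a w - 1 := by
  rw [factorElev, factorElev, List.count_cons_of_ne (by decide), List.count_cons_self]
  push_cast
  ring

lemma stepVal_append_cons (δ : ℕ → ℤ) (X Z : List Bool) (b : Bool) :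
    stepVal δ (X ++ b :: Z) X.length = factorElev δ (X.count true) [b] := by
  cases b <;> simp [stepVal, factorElev, List.take_append, List.take_of_length_le]

lemma elev_append_append (δ : ℕ → ℤ) (X p Z : List Bool) :
    elev δ (X ++ (p ++ Z)) X.length (X.length + p.length) = factorElev δ (X.count true) p := by
  induction p using List.reverseRecOn generalizing Z with
  | nil => simp [elev, factorElev_nil]
  | append_singleton p b ih =>
    have hstep := stepVal_append_cons δ (X ++ p) Z b
    have helev := ih (b :: Z)
    simp only [List.append_assoc, List.length_append, List.count_append] at hstep
    rw [List.length_append, List.length_singleton, ← Nat.add_assoc, elev,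
      Finset.sum_Ico_succ_top (by lia), ← elev, factorElev_append]
    simp only [List.append_assoc, List.singleton_append, hstep, helev]

lemma elev_of_prefix (δ : ℕ → ℤ) (X Y : List Bool) {p C : List Bool} (hp : p <+: C) :
    elev δ (X ++ (C ++ Y)) X.length (X.length + p.length) = factorElev δ (X.count true) p := by
  obtain ⟨q, rfl⟩ := hp
  rw [List.append_assoc, elev_append_append]

lemma isDeltaExcAt_append_append (δ : ℕ → ℤ) (X C Y : List Bool) :
    IsDeltaExcAt δ (X ++ (C ++ Y)) X.length C ↔ IsExcursionAfter δ (X.count true) C := by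
  have helev := elev_append_append δ X C Y
  constructor
  · rintro ⟨hup, m, hm, hle, hCm, hzero, hmin⟩
    obtain rfl : m = C.length := by
      have hlen := congrArg List.length hCm
      rw [List.length_take, List.length_drop] at hlen
      lia
    refine ⟨?_, helev.symm.trans hzero, fun p hp hne hneC => ?_⟩
    · cases C with
      | nil => simp at hm
      | cons b C => simpa using hup
    · rw [← elev_of_prefix δ X Y hp]
      exact hmin _ (List.length_pos_iff.mpr hne)
        (hp.length_le.lt_of_ne fun hlen => hneC (hp.eq_of_length hlen))
  · rintro ⟨hhead, hzero, hmin⟩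
    obtain ⟨D, rfl⟩ := List.head?_eq_some_iff.mp hhead
    refine ⟨by simp, _, List.length_pos_of_ne_nil (List.cons_ne_nil _ D), by simp, by simp,
      helev.trans hzero, fun m hm hlt => ?_⟩
    obtain ⟨p, hp, rfl⟩ : ∃ p, p <+: true :: D ∧ p.length = m :=
      ⟨_, List.take_prefix m _, List.length_take_of_le hlt.le⟩
    rw [elev_of_prefix δ X Y hp]
    exact hmin p hp (List.ne_nil_of_length_pos hm)
      fun heq => hlt.ne (congrArg List.length heq)

lemma deltaRot_iff {P Q : List Bool} :
    DeltaRot δ P Q ↔ ∃ A C B, P = A ++ false :: (C ++ B) ∧ Q = A ++ (C ++ false :: B) ∧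
      IsExcursionAfter δ (A.count true) C := by
  have hexc (A C B : List Bool) : IsDeltaExcAt δ (A ++ false :: (C ++ B)) (A.length + 1) C ↔
      IsExcursionAfter δ (A.count true) C := by
    simpa using isDeltaExcAt_append_append δ (A ++ [false]) C B
  constructor
  · rintro ⟨A, C, B, rfl, rfl, hC⟩
    exact ⟨A, C, B, rfl, rfl, (hexc A C B).mp hC⟩
  · rintro ⟨A, C, B, rfl, rfl, hC⟩
    exact ⟨A, C, B, rfl, rfl, (hexc A C B).mpr hC⟩

end FactorElev

namespace IsExcursionAfter

variable {δ : ℕ → ℤ} {a : ℕ} {C C' : List Bool}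

lemma count_true_pos (h : IsExcursionAfter δ a C) : 0 < C.count true := by
  obtain ⟨D, rfl⟩ := List.head?_eq_some_iff.mp h.head
  simp

lemma beforeUp_append_zero (h : IsExcursionAfter δ a C) (B : List Bool) :
    beforeUp (C ++ B) 0 = [] := by
  obtain ⟨D, rfl⟩ := List.head?_eq_some_iff.mp h.head
  simp [beforeUp]

lemma eq_of_prefix (h : IsExcursionAfter δ a C) (h' : IsExcursionAfter δ a C')
    (hCC' : C <+: C') : C = C' := by
  by_contra hne
  exact h'.elev_ne_zero C hCC' (fun hnil => by simpa [hnil] using h.head) hne h.elev_eq_zero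

/-- The first letter does not lower the elevation and each further one lowers it by at most one, so
it cannot become negative without vanishing first. -/
lemma factorElev_pos (hδ : ∀ i, 0 ≤ δ i) (h : IsExcursionAfter δ a C) {p : List Bool}
    (hp : p <+: C) (hne : p ≠ []) (hneC : p ≠ C) : 0 < factorElev δ a p := by
  induction p using List.reverseRecOn with
  | nil => exact absurd rfl hne
  | append_singleton q b ih =>
    refine lt_of_le_of_ne ?_ (h.elev_ne_zero _ hp hne hneC).symm
    rw [factorElev_append]
    have hup (i : ℕ) : 0 ≤ factorElev δ i [true] := by simpa [factorElev] using hδ (i + 1)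
    have hdown (i : ℕ) : factorElev δ i [false] = -1 := by simp [factorElev]
    rcases eq_or_ne q [] with rfl | hq
    · have hb : b = true := by
        obtain ⟨D, rfl⟩ := List.head?_eq_some_iff.mp h.head
        simpa using hp
      simpa [factorElev_nil, hb] using hup a
    · have hqC : q ≠ C := by
        rintro rfl
        simpa using hp.length_le
      have hpos := ih ((List.prefix_append q [b]).trans hp) hq hqC
      cases b with
      | false => rw [hdown]; lia
      | true => exact add_nonneg hpos.le (hup _)

end IsExcursionAfter

/-- The δ-altitude at which the up step of 0-based index `j` of `w` starts (the final altitude of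
`w` if there is no such up step). -/
def upAltitude (δ : ℕ → ℤ) (w : List Bool) (j : ℕ) : ℤ := factorElev δ 0 (beforeUp w j)

section Rotation

variable {δ : ℕ → ℤ} {P Q A A' C C' B B' : List Bool}

lemma upAltitude_append_add (δ : ℕ → ℤ) (x y : List Bool) (j : ℕ) :
    upAltitude δ (x ++ y) (x.count true + j) =
      factorElev δ 0 x + factorElev δ (x.count true) (beforeUp y j) := by
  rw [upAltitude, beforeUp_append_add, factorElev_append, zero_add]

lemma upAltitude_append_of_lt (δ : ℕ → ℤ) {x : List Bool} {j : ℕ} (h : j < x.count true)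
    (y : List Bool) : upAltitude δ (x ++ y) j = upAltitude δ x j := by
  rw [upAltitude, beforeUp_append_of_lt h, upAltitude]

lemma upAltitude_rotation (δ : ℕ → ℤ) (A C B : List Bool) (j : ℕ) :
    upAltitude δ (A ++ (C ++ false :: B)) j = upAltitude δ (A ++ false :: (C ++ B)) j +
      if A.count true ≤ j ∧ j < A.count true + C.count true then 1 else 0 := by
  rcases lt_or_ge j (A.count true) with hjA | hAj
  · simp [upAltitude_append_of_lt δ hjA, hjA]
  obtain ⟨i, rfl⟩ := Nat.exists_eq_add_of_le hAj
  simp only [upAltitude_append_add, beforeUp, factorElev_false_cons]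
  rcases lt_or_ge i (C.count true) with hiC | hCi
  · rw [beforeUp_append_of_lt hiC, beforeUp_append_of_lt hiC, if_pos (by lia)]
    ring
  · obtain ⟨l, rfl⟩ := Nat.exists_eq_add_of_le hCi
    rw [if_neg (by lia)]
    simp only [beforeUp_append_add, beforeUp, factorElev_append, factorElev_false_cons]
    ring

lemma IsExcursionAfter.isRaise (hδ : ∀ i, 0 ≤ δ i) (hC : IsExcursionAfter δ (A.count true) C)
    (B : List Bool) :
    IsRaise (upAltitude δ (A ++ false :: (C ++ B))) (upAltitude δ (A ++ (C ++ false :: B)))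
      (A.count true) (A.count true + C.count true) := by
  have hstart := upAltitude_append_add δ A (false :: (C ++ B)) 0
  simp only [beforeUp, hC.beforeUp_append_zero, factorElev_false_cons, factorElev_nil,
    add_zero] at hstart
  refine ⟨Nat.lt_add_of_pos_right hC.count_true_pos, upAltitude_rotation δ A C B, ?_, ?_⟩
  · intro j hAj hj
    obtain ⟨i, rfl⟩ := Nat.exists_eq_add_of_le hAj.le
    have hiC : i < C.count true := by lia
    have hcount : (beforeUp C i).count true = i := by rw [count_true_beforeUp]; lia
    have hpos : 0 < factorElev δ (A.count true) (beforeUp C i) := by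
      refine hC.factorElev_pos hδ (beforeUp_prefix C i) (fun h => ?_) fun h => ?_
      · rw [h, List.count_nil] at hcount
        lia
      · rw [h] at hcount
        lia
    rw [hstart, upAltitude_append_add, beforeUp, factorElev_false_cons,
      beforeUp_append_of_lt hiC]
    lia
  · have hB (a : ℕ) : factorElev δ a (beforeUp B 0) ≤ 0 := by
      simp [factorElev, count_true_beforeUp]
    have hend := beforeUp_append_add C B 0
    rw [add_zero] at hend
    rw [hstart, upAltitude_append_add, beforeUp, hend, factorElev_false_cons,
      factorElev_append, hC.elev_eq_zero]
    linarith [hB (A.count true + C.count true)]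

lemma DeltaRot.exists_isRaise (hδ : ∀ i, 0 ≤ δ i) (h : DeltaRot δ P Q) :
    ∃ a b, IsRaise (upAltitude δ P) (upAltitude δ Q) a b := by
  obtain ⟨A, C, B, rfl, rfl, hC⟩ := deltaRot_iff.mp h
  exact ⟨_, _, hC.isRaise hδ B⟩

lemma altLE.upAltitude_le (hδ : ∀ i, 0 ≤ δ i) (h : altLE δ P Q) :
    upAltitude δ P ≤ upAltitude δ Q := by
  induction h with
  | refl => exact le_rfl
  | tail _ hrot ih =>
    obtain ⟨a, b, hraise⟩ := hrot.exists_isRaise hδ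
    exact ih.trans hraise.le

lemma altLE.upAltitude_sub_le_sub (hδ : ∀ i, 0 ≤ δ i) (h : altLE δ P Q) {i j : ℕ} (hij : i ≤ j)
    (hP : IsNested (upAltitude δ P) i j) :
    upAltitude δ P j - upAltitude δ P i ≤ upAltitude δ Q j - upAltitude δ Q i := by
  induction h using Relation.ReflTransGen.head_induction_on with
  | refl => exact le_rfl
  | head hrot _ ih =>
    obtain ⟨a, b, hraise⟩ := hrot.exists_isRaise hδ
    exact (hraise.sub_le_sub hP hij).trans (ih (hraise.isNested hP))

lemma DeltaRot.not_altLE (hδ : ∀ i, 0 ≤ δ i) (h : DeltaRot δ P Q) : ¬ altLE δ Q P := by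
  intro hQP
  obtain ⟨a, b, hraise⟩ := h.exists_isRaise hδ
  have hle := hQP.upAltitude_le hδ a
  rw [hraise.apply_eq a, if_pos ⟨le_rfl, hraise.lt⟩] at hle
  lia

lemma IsExcursionAfter.rotation_unique (hC : IsExcursionAfter δ (A.count true) C)
    (hC' : IsExcursionAfter δ (A'.count true) C') (hcount : A.count true = A'.count true)
    (heq : A ++ false :: (C ++ B) = A' ++ false :: (C' ++ B')) :
    A = A' ∧ C = C' ∧ B = B' := by
  have hbefore := beforeUp_append_add A (false :: (C ++ B)) 0
  rw [heq, hcount, beforeUp_append_add, beforeUp, beforeUp, hC.beforeUp_append_zero,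
    hC'.beforeUp_append_zero] at hbefore
  obtain rfl := (List.append_cancel_right hbefore).symm
  have hCB : C ++ B = C' ++ B' := by simpa using heq
  have hCC' : C = C' := (List.prefix_or_prefix_of_prefix (List.prefix_append C B)
    (hCB ▸ List.prefix_append C' B')).elim (hC.eq_of_prefix hC')
    fun h => (hC'.eq_of_prefix hC h).symm
  exact ⟨rfl, hCC', by simpa [hCC'] using hCB⟩

end Rotation

lemma prefix_append_cases {α : Type*} {p x y : List α} (h : p <+: x ++ y) :
    p <+: x ∨ ∃ q, q <+: y ∧ p = x ++ q := by
  rcases List.prefix_or_prefix_of_prefix h (List.prefix_append x y) with hpx | ⟨q, rfl⟩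
  · exact .inl hpx
  · exact .inr ⟨q, (List.prefix_append_right_inj x).mp h, rfl⟩

lemma exists_prefix_of_prefix_rotation {A C B p : List Bool} (hp : p <+: A ++ (C ++ false :: B)) :
    ∃ q, q <+: A ++ false :: (C ++ B) ∧ q.count true = p.count true ∧
      p.count false ≤ q.count false := by
  rcases prefix_append_cases hp with hpA | ⟨p₁, hp₁, rfl⟩
  · exact ⟨p, hpA.trans (List.prefix_append A _), rfl, le_rfl⟩
  rcases prefix_append_cases hp₁ with hpC | ⟨p₂, hp₂, rfl⟩
  · exact ⟨A ++ false :: p₁, by simpa using hpC.trans (List.prefix_append C B), by simp, by simp⟩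
  rcases List.prefix_cons_iff.mp hp₂ with rfl | ⟨p₃, rfl, hpB⟩
  · exact ⟨A ++ false :: C, by simp, by simp, by simp⟩
  · exact ⟨A ++ false :: (C ++ p₃), by simpa using hpB, by simp, by simp [Nat.add_assoc]⟩

lemma DeltaRot.isDyckWord {δ : ℕ → ℤ} {n : ℕ} {P Q : List Bool} (h : DeltaRot δ P Q)
    (hP : IsDyckWord n P) : IsDyckWord n Q := by
  obtain ⟨A, C, B, rfl, rfl, -⟩ := h
  obtain ⟨hup, hdown, hpre⟩ := hP
  refine ⟨by simpa using hup, by simpa [Nat.add_assoc] using hdown, fun p hp => ?_⟩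
  obtain ⟨q, hq, htrue, hfalse⟩ := exists_prefix_of_prefix_rotation hp
  exact hfalse.trans (htrue ▸ hpre q hq)

/-- The word obtained from `A d^k C B` by moving `t ≤ k` of the `k` down steps from before `C` to
after `C`. -/
def slide (A C B : List Bool) (k t : ℕ) : List Bool :=
  A ++ (List.replicate (k - t) false ++ (C ++ (List.replicate t false ++ B)))

section Slide

variable {δ : ℕ → ℤ} {A C B : List Bool} {k t : ℕ}

lemma slide_of_lt (A C B : List Bool) (ht : t < k) :
    slide A C B k t = (A ++ List.replicate (k - (t + 1)) false) ++
      false :: (C ++ (List.replicate t false ++ B)) := by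
  rw [slide, show k - t = k - (t + 1) + 1 by lia, List.replicate_succ']
  simp

lemma slide_succ (A C B : List Bool) (k t : ℕ) :
    slide A C B k (t + 1) = (A ++ List.replicate (k - (t + 1)) false) ++
      (C ++ false :: (List.replicate t false ++ B)) := by
  simp [slide, List.replicate_succ]

lemma count_true_append_replicate_false (A : List Bool) (m : ℕ) :
    (A ++ List.replicate m false).count true = A.count true := by
  simp [List.count_replicate]

namespace IsExcursionAfter

lemma deltaRot_slide (hC : IsExcursionAfter δ (A.count true) C) (ht : t < k) :
    DeltaRot δ (slide A C B k t) (slide A C B k (t + 1)) :=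
  deltaRot_iff.mpr ⟨_, C, _, slide_of_lt A C B ht, slide_succ A C B k t,
    by rwa [count_true_append_replicate_false]⟩

lemma isRaise_slide (hδ : ∀ i, 0 ≤ δ i) (hC : IsExcursionAfter δ (A.count true) C)
    (ht : t < k) : IsRaise (upAltitude δ (slide A C B k t)) (upAltitude δ (slide A C B k (t + 1)))
      (A.count true) (A.count true + C.count true) := by
  rw [slide_of_lt A C B ht, slide_succ, ← count_true_append_replicate_false A (k - (t + 1))]
  exact isRaise hδ (by rwa [count_true_append_replicate_false]) _

lemma upAltitude_slide (hδ : ∀ i, 0 ≤ δ i) (hC : IsExcursionAfter δ (A.count true) C)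
    (ht : t ≤ k) (j : ℕ) :
    upAltitude δ (slide A C B k t) j = upAltitude δ (slide A C B k 0) j +
      if A.count true ≤ j ∧ j < A.count true + C.count true then (t : ℤ) else 0 := by
  induction t with
  | zero => simp
  | succ t ih =>
    rw [(hC.isRaise_slide hδ ht).apply_eq j, ih (by lia)]
    split_ifs <;> push_cast <;> ring

/-- A rotation at an up step outside `C` would raise an altitude above its value in `A C d^k B`; one
at a later up step of `C` would do so for the altitude relative to the first up step of `C`. -/
lemma eq_of_isRaise_slide (hδ : ∀ i, 0 ≤ δ i) (hC : IsExcursionAfter δ (A.count true) C)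
    (ht : t < k) {R : List Bool} {a b : ℕ}
    (hR : IsRaise (upAltitude δ (slide A C B k t)) (upAltitude δ R) a b)
    (hle : altLE δ R (slide A C B k k)) : a = A.count true := by
  have hRa : upAltitude δ R a = upAltitude δ (slide A C B k t) a + 1 := by
    rw [hR.apply_eq a, if_pos ⟨le_rfl, hR.lt⟩]
  have hmem : A.count true ≤ a ∧ a < A.count true + C.count true := by
    by_contra hout
    have hraised := hle.upAltitude_le hδ a
    rw [hRa, hC.upAltitude_slide hδ ht.le, hC.upAltitude_slide hδ le_rfl, if_neg hout] at hraised
    lia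
  by_contra hne
  have hRA : upAltitude δ R (A.count true) = upAltitude δ (slide A C B k t) (A.count true) := by
    rw [hR.apply_eq, if_neg (by lia), add_zero]
  have hnested : IsNested (upAltitude δ (slide A C B k t)) (A.count true) a := fun x hAx hxa =>
    (hC.isRaise_slide hδ ht).lt_apply x hAx (by lia)
  have hrel := hle.upAltitude_sub_le_sub hδ hmem.1 (hR.isNested hnested)
  rw [hRa, hRA, hC.upAltitude_slide hδ ht.le a, hC.upAltitude_slide hδ ht.le (A.count true),
    hC.upAltitude_slide hδ le_rfl a, hC.upAltitude_slide hδ le_rfl (A.count true), if_pos hmem,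
    if_pos ⟨le_rfl, hmem.1.trans_lt hmem.2⟩, if_pos hmem,
    if_pos ⟨le_rfl, hmem.1.trans_lt hmem.2⟩] at hrel
  lia

lemma eq_slide_succ (hδ : ∀ i, 0 ≤ δ i) (hC : IsExcursionAfter δ (A.count true) C)
    (ht : t < k) {R : List Bool} (hR : DeltaRot δ (slide A C B k t) R)
    (hle : altLE δ R (slide A C B k k)) : R = slide A C B k (t + 1) := by
  obtain ⟨A', C', B', hslide, rfl, hC'⟩ := deltaRot_iff.mp hR
  have hcount : A'.count true = A.count true :=
    hC.eq_of_isRaise_slide hδ ht (hslide ▸ hC'.isRaise hδ B') hle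
  have hAcount := count_true_append_replicate_false A (k - (t + 1))
  obtain ⟨rfl, rfl, rfl⟩ := rotation_unique (hAcount ▸ hC) hC' (hAcount.trans hcount.symm)
    ((slide_of_lt A C B ht).symm.trans hslide)
  exact (slide_succ A C B k t).symm

lemma isForcedPath_slide (hδ : ∀ i, 0 ≤ δ i) (hC : IsExcursionAfter δ (A.count true) C)
    (B : List Bool) (k : ℕ) : IsForcedPath (DeltaRot δ) (slide A C B k) k :=
  ⟨fun _ ht => hC.deltaRot_slide ht, fun _ ht _ hR hle => hC.eq_slide_succ hδ ht hR hle⟩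

end IsExcursionAfter

end Slide

theorem stmt14_general {k : ℕ} {δ : ℕ → ℤ} (hδ : ∀ i, 0 ≤ δ i) {S : Set (List Bool)}
    (hS : ∀ P Q, DeltaRot δ P Q → P ∈ S → Q ∈ S) {P Q A C B : List Bool} (hP : P ∈ S)
    (hPd : P = A ++ (List.replicate k false ++ (C ++ B)))
    (hQd : Q = A ++ (C ++ (List.replicate k false ++ B)))
    (hC : IsDeltaExcAt δ P (A.length + k) C) :
    altLE δ P Q ∧ LinearInterval S (altLE δ) P Q ∧ IntervalHeight S (altLE δ) P Q k := by
  have hexc : IsExcursionAfter δ (A.count true) C := by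
    rw [← count_true_append_replicate_false A k, ← isDeltaExcAt_append_append δ _ C B]
    simpa [hPd] using hC
  obtain rfl : P = slide A C B k 0 := by simp [hPd, slide]
  obtain rfl : Q = slide A C B k k := by simp [hQd, slide]
  have hpath : IsForcedPath (DeltaRot δ) (slide A C B k) k := hexc.isForcedPath_slide hδ B k
  have hmem : ∀ t ≤ k, slide A C B k t ∈ S := by
    intro t ht
    induction t with
    | zero => exact hP
    | succ t ih => exact hS _ _ (hpath.rel_succ t ht) (ih (by lia))
  have hr : ∀ P Q, DeltaRot δ P Q → ¬ altLE δ Q P := fun _ _ h => h.not_altLE hδ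
  exact ⟨hpath.reflTransGen (Nat.zero_le k) le_rfl, hpath.linearInterval hr hmem,
    hpath.intervalHeight hr hmem⟩

/-- a left interval of height `k ≥ 2` in `Tam^δ_n` is linear of
height `k`. -/
theorem stmt14 (n k : ℕ) (hk : 2 ≤ k) (δ : ℕ → ℤ) (hδ : IsIncFun δ)
    (P Q A C B : List Bool) (hP : IsDyckWord n P) (hQ : IsDyckWord n Q)
    (hPd : P = A ++ (List.replicate k false ++ (C ++ B)))
    (hQd : Q = A ++ (C ++ (List.replicate k false ++ B)))
    (hC : IsDeltaExcAt δ P (A.length + k) C) :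
    altLE δ P Q ∧ LinearInterval (DyckSet n) (altLE δ) P Q ∧
      IntervalHeight (DyckSet n) (altLE δ) P Q k :=
  stmt14_general (fun i => (hδ i).elim Eq.ge fun h => h ▸ zero_le_one)
    (fun _ _ h hP => h.isDyckWord hP) hP hPd hQd hC
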